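/- Under hypothesis (1.0), assume δ = sup_{x∈(0,D)} μ(0,x)·ν(x,D) < ∞. For fixed x₀, x₁ ∈ [0,D) with x₀ < x₁, define f₁^{x₀,x₁} = ν(·∨x₀, x₁)·1_{[0,x₁)} and fₙ^{x₀,x₁} = (f_{n−1}^{x₀,x₁}·II(f_{n−1}^{x₀,x₁}))(·∨x₀)·1_{[0,x₁)} for n ≥ 2, and set δₙ' = sup_{x₀<x₁} inf_{x<x₁} II(fₙ^{x₀,x₁})(x). Then δ^{-1} ≥ (δₙ')^{-1} ≥ λ₀ for every n ≥ 1. Moreover, setting δ̄ₙ = sup_{x₀<x₁} μ((fₙ^{x₀,x₁})²)/D(fₙ^{x₀,x₁}), one has δ̄ₙ^{-1} ≥ λ₀ and δ̄_{n+1} ≥ δₙ' for every n ≥ 1, and δ̄₁ = δ₁'. -/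

import Mathlib

/-!
For fixed `0 ≤ x₀ < x₁ < D` write `K₀ = 1`, `Kₙ₊₁(s) = ∫_0^s fₙ dμ`. The recursion says exactly
that `fₙ(x) = ∫_{x ∨ x₀}^{x₁} Kₙ dν` on `[0, x₁)` (`fseqLoc_facts`), all quantities being positive
and finite. Four facts about each pair `(x₀, x₁)` then give the theorem on taking suprema.

* If `c ≤ II(fₙ)`, that is `c fₙ ≤ fₙ₊₁`, integrating twice gives `c ≤ II(fₙ₊₁)`
  (`Adm.inf_mono`); and `II(f₀) ≥ μ(0,x₀) ν(x₀,x₁)` (`Adm.base`). Letting `x₁ ↑ D` shows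
  `δ ≤ δₙ'`.
* Since `fₙ' = -e^{-C} Kₙ` on `(x₀, x₁)` and `fₙ' = 0` elsewhere, `D(fₙ) = ∫_{x₀}^{x₁} Kₙ² dν`
  (`Adm.Dform_eq`), and by Tonelli `D(fₙ₊₁) = μ(fₙ fₙ₊₁)`. Hence `c fₙ ≤ fₙ₊₁` implies
  `c D(fₙ₊₁) ≤ μ(fₙ₊₁²)` (`Adm.inf_le_bar`).
* `II(f₀)` is an average of a nondecreasing function over `(x, x₁)`, so its infimum is its value
  at `x₀`, which Tonelli identifies with `μ(f₀²) / D(f₀)` (`Adm.bar_zero`).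
* `λ₀ μ(fₙ²) ≤ D(fₙ)`: smoothing the jumps of `fₙ'` by cutoffs produces admissible test
  functions converging to `fₙ` without increasing the Dirichlet form (`Adm.bar_le`).

The bound `λ₀ ≤ (δₙ')⁻¹` follows from the second and fourth facts.
-/

open MeasureTheory Set Filter Topology ENNReal

noncomputable section

/-- The open interval `(0, D)` in `ℝ`, where `D : ℝ≥0∞` may be infinite. -/
def ooI (D : ℝ≥0∞) : Set ℝ := {x : ℝ | 0 < x ∧ ENNReal.ofReal x < D}

/-- The interval `[0, D)` in `ℝ`. -/
def coI (D : ℝ≥0∞) : Set ℝ := {x : ℝ | 0 ≤ x ∧ ENNReal.ofReal x < D}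

/-- The interval `[0, D]` in `ℝ` (conventionally `[0, ∞)` when `D = ∞`). -/
def ccI (D : ℝ≥0∞) : Set ℝ := {x : ℝ | 0 ≤ x ∧ ENNReal.ofReal x ≤ D}

/-- `C(x) = ∫_0^x b(u)/a(u) du`. -/
def Cf (a b : ℝ → ℝ) (x : ℝ) : ℝ := ∫ u in Set.Ioo 0 x, b u / a u

/-- The measure `μ(dx) = (e^{C(x)}/a(x)) dx` on `(0, D)`. -/
def muM (a b : ℝ → ℝ) (D : ℝ≥0∞) : Measure ℝ :=
  (volume.restrict (ooI D)).withDensity fun x => ENNReal.ofReal (Real.exp (Cf a b x) / a x)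

/-- The measure `ν(dx) = e^{-C(x)} dx` on `(0, D)`. -/
def nuM (a b : ℝ → ℝ) (D : ℝ≥0∞) : Measure ℝ :=
  (volume.restrict (ooI D)).withDensity fun x => ENNReal.ofReal (Real.exp (-Cf a b x))

/-- Hypothesis (1.0): `a`, `b` Borel measurable, `a > 0` on `(0,D)`, and `b/a`, `e^C/a`
locally integrable on `[0, D]`. -/
def Hyp (a b : ℝ → ℝ) (D : ℝ≥0∞) : Prop :=
  Measurable a ∧ Measurable b ∧ (∀ x ∈ ooI D, 0 < a x) ∧
    ∀ p : ℝ, 0 ≤ p → ENNReal.ofReal p ≤ D →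
      IntegrableOn (fun u => b u / a u) (Set.Icc 0 p) ∧
      IntegrableOn (fun u => Real.exp (Cf a b u) / a u) (Set.Icc 0 p)

/-- `f ∈ C¹(0,D) ∩ C[0,D]`. -/
def C1C (D : ℝ≥0∞) (f : ℝ → ℝ) : Prop :=
  ContinuousOn f (ccI D) ∧ (∀ x ∈ ooI D, DifferentiableAt ℝ f x) ∧
    ContinuousOn (deriv f) (ooI D)

/-- The Dirichlet form `D(f) = ∫_0^D e^{C} f'^2 dx`. -/
def Dform (a b : ℝ → ℝ) (D : ℝ≥0∞) (f : ℝ → ℝ) : ℝ≥0∞ :=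
  ∫⁻ x in ooI D, ENNReal.ofReal (Real.exp (Cf a b x) * deriv f x ^ 2)

/-- `μ(f²)`. -/
def muL2 (a b : ℝ → ℝ) (D : ℝ≥0∞) (f : ℝ → ℝ) : ℝ≥0∞ :=
  ∫⁻ x, ENNReal.ofReal (f x ^ 2) ∂(muM a b D)

/-- The ND (Neumann at `0`, Dirichlet at `D`) principal eigenvalue `λ₀`, defined with
compactly supported test functions. -/
def lam0 (a b : ℝ → ℝ) (D : ℝ≥0∞) : ℝ≥0∞ :=
  sInf {r | ∃ f : ℝ → ℝ, C1C D f ∧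
    (∃ p : ℝ, 0 ≤ p ∧ ENNReal.ofReal p < D ∧ ∀ x, p < x → f x = 0) ∧
    (D ≠ ∞ → f D.toReal = 0) ∧ muL2 a b D f = 1 ∧ r = Dform a b D f}

/-- `δ = sup_{x ∈ (0,D)} μ(0,x) ν(x,D)`. -/
def deltaND (a b : ℝ → ℝ) (D : ℝ≥0∞) : ℝ≥0∞ :=
  ⨆ x ∈ ooI D, muM a b D (Set.Ioo 0 x) * nuM a b D (Set.Ioi x)

/-- For `f` supported in `[0,x₁)`, `II(f)(x) = (1/f(x)) ∫_x^{x₁} ν(ds) ∫_0^s f dμ`. -/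
def opIIcut (a b : ℝ → ℝ) (D : ℝ≥0∞) (x₁ : ℝ) (f : ℝ → ℝ) (x : ℝ) : ℝ≥0∞ :=
  (∫⁻ s in Set.Ioo x x₁,
      (∫⁻ u in Set.Ioo 0 s, ENNReal.ofReal (f u) ∂(muM a b D)) ∂(nuM a b D)) /
    ENNReal.ofReal (f x)

/-- The localized approximating sequence
`f₁^{x₀,x₁} = ν(·∨x₀, x₁) 1_{[0,x₁)}`,
`fₙ^{x₀,x₁} = (f_{n-1}^{x₀,x₁} II(f_{n-1}^{x₀,x₁}))(·∨x₀) 1_{[0,x₁)}`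
(indexed so that `fseqLoc a b D x₀ x₁ n` is `f_{n+1}^{x₀,x₁}`). -/
def fseqLoc (a b : ℝ → ℝ) (D : ℝ≥0∞) (x₀ x₁ : ℝ) : ℕ → ℝ → ℝ
  | 0 => fun x =>
      if 0 ≤ x ∧ x < x₁ then (nuM a b D (Set.Ioo (max x x₀) x₁)).toReal else 0
  | n + 1 => fun x =>
      if 0 ≤ x ∧ x < x₁ then
        fseqLoc a b D x₀ x₁ n (max x x₀) *
          (opIIcut a b D x₁ (fseqLoc a b D x₀ x₁ n) (max x x₀)).toReal
      else 0

/-- `δₙ' = sup_{x₀<x₁} inf_{x<x₁} II(fₙ^{x₀,x₁})(x)` (indexed so that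
`delLoc a b D n` is `δ_{n+1}'`). -/
def delLoc (a b : ℝ → ℝ) (D : ℝ≥0∞) (n : ℕ) : ℝ≥0∞ :=
  ⨆ x₀ : ℝ, ⨆ x₁ : ℝ, ⨆ _ : 0 ≤ x₀ ∧ x₀ < x₁ ∧ ENNReal.ofReal x₁ < D,
    ⨅ x ∈ Set.Iio x₁, opIIcut a b D x₁ (fseqLoc a b D x₀ x₁ n) x

/-- `δ̄ₙ = sup_{x₀<x₁} μ((fₙ^{x₀,x₁})²) / D(fₙ^{x₀,x₁})` (indexed so that
`delBar a b D n` is `δ̄_{n+1}`). -/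
def delBar (a b : ℝ → ℝ) (D : ℝ≥0∞) (n : ℕ) : ℝ≥0∞ :=
  ⨆ x₀ : ℝ, ⨆ x₁ : ℝ, ⨆ _ : 0 ≤ x₀ ∧ x₀ < x₁ ∧ ENNReal.ofReal x₁ < D,
    muL2 a b D (fseqLoc a b D x₀ x₁ n) / Dform a b D (fseqLoc a b D x₀ x₁ n)

/-! ### The measures `μ` and `ν` on intervals -/

theorem Ioo_subset_ooI {D : ℝ≥0∞} {x y : ℝ} (hx : 0 ≤ x) (hy : ENNReal.ofReal y ≤ D) :
    Set.Ioo x y ⊆ ooI D := by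
  intro s hs
  have hs0 : 0 < s := hx.trans_lt hs.1
  exact ⟨hs0, lt_of_lt_of_le ((ENNReal.ofReal_lt_ofReal_iff (hs0.trans hs.2)).2 hs.2) hy⟩

theorem Cf_continuousOn {a b : ℝ → ℝ} {D : ℝ≥0∞} (hyp : Hyp a b D) {p : ℝ} (hp : 0 ≤ p)
    (hpD : ENNReal.ofReal p ≤ D) : ContinuousOn (Cf a b) (Set.Icc 0 p) := by
  have h := intervalIntegral.continuousOn_primitive (hyp.2.2.2 p hp hpD).1
  refine h.congr fun x _ => ?_
  simp only [Cf]
  exact (integral_Ioc_eq_integral_Ioo).symm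

theorem measurableSet_ooI (D : ℝ≥0∞) : MeasurableSet (ooI D) :=
  (measurableSet_Ioi (a := (0 : ℝ))).inter
    (measurableSet_lt ENNReal.measurable_ofReal measurable_const)

theorem nuM_restrict {a b : ℝ → ℝ} {D : ℝ≥0∞} {x y : ℝ} (hx : 0 ≤ x)
    (hy : ENNReal.ofReal y ≤ D) :
    (nuM a b D).restrict (Set.Ioo x y) = (volume.restrict (Set.Ioo x y)).withDensity
      fun s => ENNReal.ofReal (Real.exp (-Cf a b s)) := by
  rw [nuM, restrict_withDensity measurableSet_Ioo, Measure.restrict_restrict measurableSet_Ioo,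
    Set.inter_eq_left.2 (Ioo_subset_ooI hx hy)]

theorem muM_restrict {a b : ℝ → ℝ} {D : ℝ≥0∞} {x y : ℝ} (hx : 0 ≤ x)
    (hy : ENNReal.ofReal y ≤ D) :
    (muM a b D).restrict (Set.Ioo x y) = (volume.restrict (Set.Ioo x y)).withDensity
      fun s => ENNReal.ofReal (Real.exp (Cf a b s) / a s) := by
  rw [muM, restrict_withDensity measurableSet_Ioo, Measure.restrict_restrict measurableSet_Ioo,
    Set.inter_eq_left.2 (Ioo_subset_ooI hx hy)]

theorem nuM_lintegral {a b : ℝ → ℝ} {D : ℝ≥0∞} (hyp : Hyp a b D) {x y : ℝ} (hx : 0 ≤ x)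
    (hy : ENNReal.ofReal y ≤ D) {g : ℝ → ℝ≥0∞} (hg : Measurable g) :
    ∫⁻ s in Set.Ioo x y, g s ∂(nuM a b D) =
      ∫⁻ s in Set.Ioo x y, ENNReal.ofReal (Real.exp (-Cf a b s)) * g s := by
  rw [nuM_restrict hx hy, lintegral_withDensity_eq_lintegral_mul₀ _ hg.aemeasurable]
  · rfl
  · rcases le_or_gt y x with hxy | hxy
    · simp [Set.Ioo_eq_empty_of_le hxy]
    have h := (Cf_continuousOn hyp (hx.trans hxy.le) hy).mono
      (Set.Ioo_subset_Icc_self.trans (Set.Icc_subset_Icc_left hx) : Set.Ioo x y ⊆ _)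
    exact (ENNReal.continuous_ofReal.comp_continuousOn
      (Real.continuous_exp.comp_continuousOn h.neg)).aemeasurable measurableSet_Ioo

theorem nuM_lt_top {a b : ℝ → ℝ} {D : ℝ≥0∞} (hyp : Hyp a b D) {x y : ℝ} (hx : 0 ≤ x)
    (hy : ENNReal.ofReal y ≤ D) : nuM a b D (Set.Ioo x y) < ∞ := by
  rcases le_or_gt y x with hxy | hxy
  · simp [Set.Ioo_eq_empty_of_le hxy]
  rw [← setLIntegral_one, nuM_lintegral hyp hx hy measurable_const]
  simp only [mul_one]
  have h := Real.continuous_exp.comp_continuousOn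
    ((Cf_continuousOn hyp (hx.trans hxy.le) hy).neg)
  have h2 : IntegrableOn (fun s => Real.exp (-Cf a b s)) (Set.Ioo x y) :=
    (h.integrableOn_compact isCompact_Icc).mono_set
      (Set.Ioo_subset_Icc_self.trans (Set.Icc_subset_Icc_left hx))
  exact h2.lintegral_lt_top

theorem muM_lt_top {a b : ℝ → ℝ} {D : ℝ≥0∞} (hyp : Hyp a b D) {x y : ℝ} (hx : 0 ≤ x)
    (hy : ENNReal.ofReal y ≤ D) : muM a b D (Set.Ioo x y) < ∞ := by
  rcases le_or_gt y x with hxy | hxy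
  · simp [Set.Ioo_eq_empty_of_le hxy]
  rw [← Measure.restrict_apply_univ, muM_restrict hx hy, withDensity_apply _ MeasurableSet.univ,
    Measure.restrict_univ]
  exact ((hyp.2.2.2 y (hx.trans hxy.le) hy).2.mono_set
    (Set.Ioo_subset_Icc_self.trans (Set.Icc_subset_Icc_left hx))).lintegral_lt_top

theorem Cf_aemeasurable {a b : ℝ → ℝ} {D : ℝ≥0∞} (hyp : Hyp a b D) {x y : ℝ} (hx : 0 ≤ x)
    (hy : ENNReal.ofReal y ≤ D) : AEMeasurable (Cf a b) (volume.restrict (Set.Ioo x y)) := by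
  rcases le_or_gt y x with hxy | hxy
  · simp [Set.Ioo_eq_empty_of_le hxy]
  exact ((Cf_continuousOn hyp (hx.trans hxy.le) hy).mono
    (Set.Ioo_subset_Icc_self.trans (Set.Icc_subset_Icc_left hx))).aemeasurable measurableSet_Ioo

theorem lintegral_ofReal_Ioo_pos {c : ℝ → ℝ} {x y : ℝ} (hxy : x < y)
    (hm : AEMeasurable c (volume.restrict (Set.Ioo x y))) (hc : ∀ s ∈ Set.Ioo x y, 0 < c s) :
    0 < ∫⁻ s in Set.Ioo x y, ENNReal.ofReal (c s) := by
  rw [pos_iff_ne_zero]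
  intro h0
  rw [lintegral_eq_zero_iff' hm.ennreal_ofReal] at h0
  have h1 : ∀ᵐ s ∂(volume.restrict (Set.Ioo x y)), False := by
    filter_upwards [h0, ae_restrict_mem measurableSet_Ioo] with s hs hs2
    simp only [Pi.zero_apply, ENNReal.ofReal_eq_zero] at hs
    exact absurd hs (not_le.2 (hc s hs2))
  rw [ae_iff] at h1
  simp at h1
  linarith

theorem nuM_pos {a b : ℝ → ℝ} {D : ℝ≥0∞} (hyp : Hyp a b D) {x y : ℝ} (hx : 0 ≤ x) (hxy : x < y)
    (hy : ENNReal.ofReal y ≤ D) : 0 < nuM a b D (Set.Ioo x y) := by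
  rw [← Measure.restrict_apply_univ, nuM_restrict hx hy, withDensity_apply _ MeasurableSet.univ,
    Measure.restrict_univ]
  exact lintegral_ofReal_Ioo_pos hxy (Cf_aemeasurable hyp hx hy).neg.exp
    fun s _ => Real.exp_pos _

theorem muM_pos {a b : ℝ → ℝ} {D : ℝ≥0∞} (hyp : Hyp a b D) {x y : ℝ} (hx : 0 ≤ x) (hxy : x < y)
    (hy : ENNReal.ofReal y ≤ D) : 0 < muM a b D (Set.Ioo x y) := by
  rw [← Measure.restrict_apply_univ, muM_restrict hx hy, withDensity_apply _ MeasurableSet.univ,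
    Measure.restrict_univ]
  exact lintegral_ofReal_Ioo_pos hxy
    ((Cf_aemeasurable hyp hx hy).exp.div hyp.1.aemeasurable)
    fun s hs => div_pos (Real.exp_pos _) (hyp.2.2.1 s (Ioo_subset_ooI hx hy hs))

/-! ### Kernel form of the localized sequence -/

/-- The integrand `Kₙ` in `fₙ(x) = ∫_{x ∨ x₀}^{x₁} Kₙ dν`: `K₀ = 1` and
`Kₙ₊₁(s) = ∫_0^s fₙ dμ`, with values in `ℝ≥0∞` and the zero-based index of `fseqLoc`. -/
def Kf (a b : ℝ → ℝ) (D : ℝ≥0∞) (x₀ x₁ : ℝ) : ℕ → ℝ → ℝ≥0∞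
  | 0 => fun _ => 1
  | n + 1 => fun s => ∫⁻ u in Set.Ioo 0 s, ENNReal.ofReal (fseqLoc a b D x₀ x₁ n u) ∂(muM a b D)

/-- `Pₙ(x) = ∫_x^{x₁} Kₙ dν`, so that `fₙ(x) = Pₙ(x ∨ x₀)` on `[0, x₁)` and
`II(fₙ)(x) = Pₙ₊₁(x) / fₙ(x)`. -/
def Pf (a b : ℝ → ℝ) (D : ℝ≥0∞) (x₀ x₁ : ℝ) (n : ℕ) (x : ℝ) : ℝ≥0∞ :=
  ∫⁻ s in Set.Ioo x x₁, Kf a b D x₀ x₁ n s ∂(nuM a b D)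

theorem Kf_mono (a b : ℝ → ℝ) (D : ℝ≥0∞) (x₀ x₁ : ℝ) (n : ℕ) : Monotone (Kf a b D x₀ x₁ n) := by
  cases n with
  | zero => exact fun _ _ _ => le_rfl
  | succ n => exact fun s t hst => lintegral_mono_set (Set.Ioo_subset_Ioo_right hst)

theorem Pf_anti (a b : ℝ → ℝ) (D : ℝ≥0∞) (x₀ x₁ : ℝ) (n : ℕ) : Antitone (Pf a b D x₀ x₁ n) :=
  fun _ _ hst => lintegral_mono_set (Set.Ioo_subset_Ioo_left hst)

theorem opIIcut_eq (a b : ℝ → ℝ) (D : ℝ≥0∞) (x₀ x₁ : ℝ) (n : ℕ) (x : ℝ) :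
    opIIcut a b D x₁ (fseqLoc a b D x₀ x₁ n) x =
      Pf a b D x₀ x₁ (n + 1) x / ENNReal.ofReal (fseqLoc a b D x₀ x₁ n x) := rfl

theorem fseqLoc_zero_of_not (a b : ℝ → ℝ) (D : ℝ≥0∞) (x₀ x₁ : ℝ) (n : ℕ) {x : ℝ}
    (hx : ¬ (0 ≤ x ∧ x < x₁)) : fseqLoc a b D x₀ x₁ n x = 0 := by
  cases n <;> simp only [fseqLoc, if_neg hx]

theorem lintegral_Ioo_pos {m : Measure ℝ} {g : ℝ → ℝ≥0∞} {x y : ℝ} (hg : Measurable g)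
    (h : ∀ s ∈ Set.Ioo x y, 0 < g s) (hm : 0 < m (Set.Ioo x y)) :
    0 < ∫⁻ s in Set.Ioo x y, g s ∂m := by
  rw [setLIntegral_pos_iff hg]
  have : Function.support g ∩ Set.Ioo x y = Set.Ioo x y :=
    Set.inter_eq_right.2 fun s hs => (h s hs).ne'
  rwa [this]

/-- The kernel form of `fₙ`, together with the positivity and finiteness on which it rests:
the product `f · II(f)` in the recursion cancels to `Pₙ₊₁` only if `f` is neither `0` nor `∞`,
so the four bounds have to be carried along in the same induction. -/
theorem fseqLoc_facts {a b : ℝ → ℝ} {D : ℝ≥0∞} (hyp : Hyp a b D) {x₀ x₁ : ℝ}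
    (h01 : x₀ < x₁) (h1 : ENNReal.ofReal x₁ < D) (n : ℕ) :
    (∀ s, 0 < s → s ≤ x₁ → 0 < Kf a b D x₀ x₁ n s) ∧ Kf a b D x₀ x₁ n x₁ < ∞ ∧
    (∀ x, 0 ≤ x → x < x₁ → 0 < Pf a b D x₀ x₁ n x) ∧ Pf a b D x₀ x₁ n 0 < ∞ ∧
    (∀ x, 0 ≤ x → x < x₁ → fseqLoc a b D x₀ x₁ n x = (Pf a b D x₀ x₁ n (max x x₀)).toReal) := by
  -- positivity and finiteness of `Pf` follow from those of `Kf`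
  have key : ∀ n, (∀ s, 0 < s → s ≤ x₁ → 0 < Kf a b D x₀ x₁ n s) → Kf a b D x₀ x₁ n x₁ < ∞ →
      (∀ x, 0 ≤ x → x < x₁ → 0 < Pf a b D x₀ x₁ n x) ∧ Pf a b D x₀ x₁ n 0 < ∞ := by
    intro n hK hK1
    refine ⟨fun x hx hx1 => ?_, ?_⟩
    · exact lintegral_Ioo_pos (Kf_mono a b D x₀ x₁ n).measurable
        (fun s hs => hK s (hx.trans_lt hs.1) hs.2.le) (nuM_pos hyp hx hx1 h1.le)
    · calc Pf a b D x₀ x₁ n 0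
          ≤ ∫⁻ _ in Set.Ioo 0 x₁, Kf a b D x₀ x₁ n x₁ ∂(nuM a b D) :=
            setLIntegral_mono measurable_const fun s hs => Kf_mono a b D x₀ x₁ n hs.2.le
        _ = Kf a b D x₀ x₁ n x₁ * nuM a b D (Set.Ioo 0 x₁) := setLIntegral_const _ _
        _ < ∞ := ENNReal.mul_lt_top hK1 (nuM_lt_top hyp le_rfl h1.le)
  induction n with
  | zero =>
    have hK : ∀ s, 0 < s → s ≤ x₁ → 0 < Kf a b D x₀ x₁ 0 s := fun s _ _ => by simp [Kf]
    have hK1 : Kf a b D x₀ x₁ 0 x₁ < ∞ := by simp [Kf]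
    refine ⟨hK, hK1, (key 0 hK hK1).1, (key 0 hK hK1).2, fun x hx hx1 => ?_⟩
    simp [fseqLoc, hx, hx1, Pf, Kf]
  | succ n ih =>
    obtain ⟨-, -, ihP, ihP0, ihf⟩ := ih
    have hfin : ∀ x, 0 ≤ x → Pf a b D x₀ x₁ n x < ∞ :=
      fun x hx => (Pf_anti a b D x₀ x₁ n hx).trans_lt ihP0
    have hf : ∀ x, 0 ≤ x → x < x₁ →
        ENNReal.ofReal (fseqLoc a b D x₀ x₁ n x) = Pf a b D x₀ x₁ n (max x x₀) := by
      intro x hx hx1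
      rw [ihf x hx hx1, ENNReal.ofReal_toReal (hfin _ (le_max_of_le_left hx)).ne]
    have hK : ∀ s, 0 < s → s ≤ x₁ → 0 < Kf a b D x₀ x₁ (n + 1) s := by
      intro s hs hs1
      have : Kf a b D x₀ x₁ (n + 1) s =
          ∫⁻ u in Set.Ioo 0 s, Pf a b D x₀ x₁ n (max u x₀) ∂(muM a b D) :=
        setLIntegral_congr_fun measurableSet_Ioo
          fun u hu => hf u hu.1.le (hu.2.trans_le hs1)
      rw [this]
      refine lintegral_Ioo_pos ?_ ?_
        (muM_pos hyp le_rfl hs ((ENNReal.ofReal_le_ofReal hs1).trans h1.le))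
      · exact (Pf_anti a b D x₀ x₁ n).measurable.comp (measurable_id.max measurable_const)
      · exact fun u hu => ihP _ (le_max_of_le_left hu.1.le) (max_lt (hu.2.trans_le hs1) h01)
    have hK1 : Kf a b D x₀ x₁ (n + 1) x₁ < ∞ := by
      calc Kf a b D x₀ x₁ (n + 1) x₁
          ≤ ∫⁻ _ in Set.Ioo 0 x₁, Pf a b D x₀ x₁ n 0 ∂(muM a b D) := by
            refine setLIntegral_mono measurable_const fun u hu => ?_
            rw [hf u hu.1.le hu.2]
            exact Pf_anti a b D x₀ x₁ n (le_max_of_le_left hu.1.le)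
        _ = Pf a b D x₀ x₁ n 0 * muM a b D (Set.Ioo 0 x₁) := setLIntegral_const _ _
        _ < ∞ := ENNReal.mul_lt_top ihP0 (muM_lt_top hyp le_rfl h1.le)
    refine ⟨hK, hK1, (key _ hK hK1).1, (key _ hK hK1).2, fun x hx hx1 => ?_⟩
    have hm0 : 0 ≤ max x x₀ := le_max_of_le_left hx
    have hm1 : max x x₀ < x₁ := max_lt hx1 h01
    have hPm := ihP _ hm0 hm1
    have e : fseqLoc a b D x₀ x₁ (n + 1) x = fseqLoc a b D x₀ x₁ n (max x x₀) *
          (opIIcut a b D x₁ (fseqLoc a b D x₀ x₁ n) (max x x₀)).toReal := by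
      simp only [fseqLoc, if_pos (And.intro hx hx1)]
    rw [e, opIIcut_eq, hf _ hm0 hm1, ihf _ hm0 hm1, max_eq_left (le_max_right x x₀),
      ← ENNReal.toReal_mul, ENNReal.mul_div_cancel hPm.ne' (hfin _ hm0).ne]

/-- The standing assumptions on a localization pair: the integrability hypothesis on `a, b` and
`0 ≤ x₀ < x₁ < D`. -/
structure Adm (a b : ℝ → ℝ) (D : ℝ≥0∞) (x₀ x₁ : ℝ) : Prop where
  hyp : Hyp a b D
  h0 : 0 ≤ x₀
  h01 : x₀ < x₁
  h1 : ENNReal.ofReal x₁ < D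

section adm

variable {a b : ℝ → ℝ} {D : ℝ≥0∞} {x₀ x₁ : ℝ}

theorem Adm.Kf_pos (h : Adm a b D x₀ x₁) (n : ℕ) {s : ℝ} (hs : 0 < s) (hs1 : s ≤ x₁) :
    0 < Kf a b D x₀ x₁ n s := (fseqLoc_facts h.hyp h.h01 h.h1 n).1 s hs hs1

theorem Adm.Kf_lt_top (h : Adm a b D x₀ x₁) (n : ℕ) {s : ℝ} (hs1 : s ≤ x₁) :
    Kf a b D x₀ x₁ n s < ∞ :=
  (Kf_mono a b D x₀ x₁ n hs1).trans_lt (fseqLoc_facts h.hyp h.h01 h.h1 n).2.1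

theorem Adm.Pf_pos (h : Adm a b D x₀ x₁) (n : ℕ) {x : ℝ} (hx : 0 ≤ x) (hx1 : x < x₁) :
    0 < Pf a b D x₀ x₁ n x := (fseqLoc_facts h.hyp h.h01 h.h1 n).2.2.1 x hx hx1

theorem Adm.Pf_lt_top (h : Adm a b D x₀ x₁) (n : ℕ) {x : ℝ} (hx : 0 ≤ x) :
    Pf a b D x₀ x₁ n x < ∞ :=
  (Pf_anti a b D x₀ x₁ n hx).trans_lt (fseqLoc_facts h.hyp h.h01 h.h1 n).2.2.2.1

theorem Adm.f_eq (h : Adm a b D x₀ x₁) (n : ℕ) {x : ℝ} (hx : 0 ≤ x) (hx1 : x < x₁) :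
    fseqLoc a b D x₀ x₁ n x = (Pf a b D x₀ x₁ n (max x x₀)).toReal :=
  (fseqLoc_facts h.hyp h.h01 h.h1 n).2.2.2.2 x hx hx1

theorem Adm.ofReal_f (h : Adm a b D x₀ x₁) (n : ℕ) {x : ℝ} (hx : 0 ≤ x) (hx1 : x < x₁) :
    ENNReal.ofReal (fseqLoc a b D x₀ x₁ n x) = Pf a b D x₀ x₁ n (max x x₀) := by
  rw [h.f_eq n hx hx1, ENNReal.ofReal_toReal (h.Pf_lt_top n (le_max_of_le_left hx)).ne]

theorem Adm.f_nonneg (h : Adm a b D x₀ x₁) (n : ℕ) (x : ℝ) : 0 ≤ fseqLoc a b D x₀ x₁ n x := by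
  by_cases hx : 0 ≤ x ∧ x < x₁
  · rw [h.f_eq n hx.1 hx.2]; positivity
  · rw [fseqLoc_zero_of_not a b D x₀ x₁ n hx]

theorem Adm.measurable_f (h : Adm a b D x₀ x₁) (n : ℕ) : Measurable (fseqLoc a b D x₀ x₁ n) := by
  have : fseqLoc a b D x₀ x₁ n =
      (Set.Ico 0 x₁).indicator fun x => (Pf a b D x₀ x₁ n (max x x₀)).toReal := by
    ext x
    by_cases hx : 0 ≤ x ∧ x < x₁
    · rw [h.f_eq n hx.1 hx.2, Set.indicator_of_mem (Set.mem_Ico.2 hx)]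
    · rw [fseqLoc_zero_of_not a b D x₀ x₁ n hx, Set.indicator_of_notMem (mt Set.mem_Ico.1 hx)]
  rw [this]
  exact ((Pf_anti a b D x₀ x₁ n).measurable.comp
    (measurable_id.max measurable_const)).ennreal_toReal.indicator measurableSet_Ico

theorem Adm.II_of_mem (h : Adm a b D x₀ x₁) (n : ℕ) {x : ℝ} (hx : 0 ≤ x) (hx1 : x < x₁) :
    opIIcut a b D x₁ (fseqLoc a b D x₀ x₁ n) x =
      Pf a b D x₀ x₁ (n + 1) x / Pf a b D x₀ x₁ n (max x x₀) := by
  rw [opIIcut_eq, h.ofReal_f n hx hx1]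

/-- On the negative axis `fₙ` vanishes while the numerator of `II` does not, so these points do
not affect the infimum over `x < x₁`. -/
theorem Adm.II_of_neg (h : Adm a b D x₀ x₁) (n : ℕ) {x : ℝ} (hx : x < 0) :
    opIIcut a b D x₁ (fseqLoc a b D x₀ x₁ n) x = ∞ := by
  rw [opIIcut_eq, fseqLoc_zero_of_not _ _ _ _ _ _ (fun hh => absurd hh.1 (not_le.2 hx)),
    ENNReal.ofReal_zero, ENNReal.div_zero]
  exact ((h.Pf_pos (n + 1) le_rfl (h.h0.trans_lt h.h01)).trans_le
    (Pf_anti a b D x₀ x₁ (n + 1) hx.le)).ne'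

/-- Only the points of `[x₀, x₁)` matter for `inf II(fₙ)`: to the left of `x₀` the denominator is
constant and the numerator is nonincreasing. -/
theorem Adm.le_II_iff (h : Adm a b D x₀ x₁) (n : ℕ) (c : ℝ≥0∞) :
    c ≤ (⨅ x ∈ Set.Iio x₁, opIIcut a b D x₁ (fseqLoc a b D x₀ x₁ n) x) ↔
      ∀ x, x₀ ≤ x → x < x₁ → c * Pf a b D x₀ x₁ n x ≤ Pf a b D x₀ x₁ (n + 1) x := by
  have hdiv : ∀ x, x₀ ≤ x → x < x₁ → (c * Pf a b D x₀ x₁ n x ≤ Pf a b D x₀ x₁ (n + 1) x ↔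
      c ≤ opIIcut a b D x₁ (fseqLoc a b D x₀ x₁ n) x) := by
    intro x hx hx1
    rw [h.II_of_mem n (h.h0.trans hx) hx1, max_eq_left hx, ENNReal.le_div_iff_mul_le]
    · exact Or.inl (h.Pf_pos n (h.h0.trans hx) hx1).ne'
    · exact Or.inl (h.Pf_lt_top n (h.h0.trans hx)).ne
  constructor
  · intro hc x hx hx1
    rw [hdiv x hx hx1]
    exact hc.trans (iInf₂_le x hx1)
  · intro hc
    refine le_iInf₂ fun x hx1 => ?_
    rcases lt_or_ge x 0 with hx | hx
    · rw [h.II_of_neg n hx]; exact le_top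
    rcases le_total x₀ x with hx0 | hx0
    · exact (hdiv x hx0 hx1).1 (hc x hx0 hx1)
    · refine ((hdiv x₀ le_rfl h.h01).1 (hc x₀ le_rfl h.h01)).trans ?_
      rw [h.II_of_mem n hx hx1, h.II_of_mem n h.h0 h.h01, max_eq_right hx0, max_self]
      gcongr
      exact Pf_anti a b D x₀ x₁ (n + 1) hx0

/-- The infimum of `II(fₙ)` is nondecreasing in `n`: a bound `c fₙ ≤ fₙ₊₁` is preserved when both
sides are integrated against `μ` and then `ν`. -/
theorem Adm.inf_mono (h : Adm a b D x₀ x₁) (n : ℕ) :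
    (⨅ x ∈ Set.Iio x₁, opIIcut a b D x₁ (fseqLoc a b D x₀ x₁ n) x) ≤
      ⨅ x ∈ Set.Iio x₁, opIIcut a b D x₁ (fseqLoc a b D x₀ x₁ (n + 1)) x := by
  have hc := (h.le_II_iff n _).1 le_rfl
  generalize (⨅ x ∈ Set.Iio x₁, opIIcut a b D x₁ (fseqLoc a b D x₀ x₁ n) x) = c at hc
  rw [h.le_II_iff (n + 1)]
  have hK : ∀ s, s ≤ x₁ → c * Kf a b D x₀ x₁ (n + 1) s ≤ Kf a b D x₀ x₁ (n + 2) s := by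
    intro s hs
    simp only [Kf]
    rw [← lintegral_const_mul _ (h.measurable_f n).ennreal_ofReal]
    refine setLIntegral_mono (h.measurable_f (n + 1)).ennreal_ofReal fun u hu => ?_
    rw [h.ofReal_f n hu.1.le (hu.2.trans_le hs), h.ofReal_f (n + 1) hu.1.le (hu.2.trans_le hs)]
    exact hc _ (le_max_right _ _) (max_lt (hu.2.trans_le hs) h.h01)
  intro x hx hx1
  unfold Pf
  rw [← lintegral_const_mul _ (Kf_mono a b D x₀ x₁ (n + 1)).measurable]
  exact setLIntegral_mono (Kf_mono a b D x₀ x₁ (n + 2)).measurable fun s hs => hK s hs.2.le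

/-- For `s ≥ x₀`, `∫_0^s f₀ dμ ≥ ∫_0^{x₀} f₀ dμ = μ(0,x₀) ν(x₀,x₁)`, as `f₀` is constant on
`[0, x₀]`. -/
theorem Adm.base (h : Adm a b D x₀ x₁) :
    muM a b D (Set.Ioo 0 x₀) * nuM a b D (Set.Ioo x₀ x₁) ≤
      ⨅ x ∈ Set.Iio x₁, opIIcut a b D x₁ (fseqLoc a b D x₀ x₁ 0) x := by
  have hP0 : ∀ x, Pf a b D x₀ x₁ 0 x = nuM a b D (Set.Ioo x x₁) := fun x => by simp [Pf, Kf]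
  rw [h.le_II_iff 0]
  intro x hx hx1
  have hK : ∀ s ∈ Set.Ioo x x₁, muM a b D (Set.Ioo 0 x₀) * nuM a b D (Set.Ioo x₀ x₁) ≤
      Kf a b D x₀ x₁ 1 s := by
    intro s hs
    refine le_trans ?_ (Kf_mono a b D x₀ x₁ 1 (hx.trans hs.1.le))
    rw [mul_comm, ← setLIntegral_const]
    refine setLIntegral_mono (h.measurable_f 0).ennreal_ofReal fun u hu => ?_
    rw [h.ofReal_f 0 hu.1.le (hu.2.trans h.h01), max_eq_right hu.2.le, hP0]
  rw [hP0, ← setLIntegral_const]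
  exact setLIntegral_mono (Kf_mono a b D x₀ x₁ 1).measurable hK

end adm

/-! ### The comparison `δ ≤ δₙ'` -/

theorem delta_le_delLoc {a b : ℝ → ℝ} {D : ℝ≥0∞} (hyp : Hyp a b D) (n : ℕ) :
    deltaND a b D ≤ delLoc a b D n := by
  have hmono : ∀ n, delLoc a b D 0 ≤ delLoc a b D n := by
    intro n
    induction n with
    | zero => exact le_rfl
    | succ n ih =>
      exact ih.trans (iSup_mono fun x₀ => iSup_mono fun x₁ => iSup_mono fun h =>
        Adm.inf_mono ⟨hyp, h.1, h.2.1, h.2.2⟩ n)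
  refine le_trans (iSup₂_le fun x₀ hx₀ => ?_) (hmono n)
  -- exhaust `(x₀, D)` by intervals `(x₀, x₁)` with `x₁ < D`
  obtain ⟨u, hu, hut⟩ : ∃ u : ℕ → ℝ, (∀ k, x₀ < u k ∧ ENNReal.ofReal (u k) < D) ∧
      Monotone u ∧ Set.Ioi x₀ ∩ ooI D ⊆ ⋃ k, Set.Ioo x₀ (u k) := by
    obtain ⟨v, hv, hvD, hvt⟩ := exists_seq_strictMono_tendsto' hx₀.2
    have hne : ∀ k, v k ≠ ∞ := fun k => ((hvD k).2.trans_le le_top).ne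
    refine ⟨fun k => (v k).toReal, fun k => ⟨?_, ?_⟩, ?_, ?_⟩
    · exact (ENNReal.ofReal_lt_iff_lt_toReal hx₀.1.le (hne k)).1 (hvD k).1
    · rw [ENNReal.ofReal_toReal (hne k)]; exact (hvD k).2
    · exact fun i j hij => ENNReal.toReal_mono (hne j) (hv.monotone hij)
    · rintro s ⟨hs0, hs⟩
      obtain ⟨k, hk⟩ := (hvt.eventually (lt_mem_nhds hs.2)).exists
      exact Set.mem_iUnion.2 ⟨k, hs0, (ENNReal.ofReal_lt_iff_lt_toReal hs.1.le (hne k)).1 hk⟩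
  have hnu : nuM a b D (Set.Ioi x₀) ≤ ⨆ k, nuM a b D (Set.Ioo x₀ (u k)) := by
    rw [← Monotone.measure_iUnion fun i j hij => Set.Ioo_subset_Ioo_right (hut.1 hij)]
    have hz : nuM a b D (ooI D)ᶜ = 0 := by
      rw [nuM, withDensity_apply _ (measurableSet_ooI D).compl,
        Measure.restrict_restrict (measurableSet_ooI D).compl]
      simp
    rw [← measure_inter_add_sdiff (Set.Ioi x₀) (measurableSet_ooI D),
      measure_mono_null (fun s hs => hs.2 : Set.Ioi x₀ \ ooI D ⊆ (ooI D)ᶜ) hz, add_zero]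
    exact measure_mono hut.2
  refine (mul_le_mul_right hnu _).trans ?_
  rw [ENNReal.mul_iSup]
  refine iSup_le fun k => ?_
  have h : Adm a b D x₀ (u k) := ⟨hyp, hx₀.1.le, (hu k).1, (hu k).2⟩
  exact h.base.trans (le_iSup_of_le x₀ (le_iSup_of_le (u k)
    (le_iSup_of_le ⟨h.h0, h.h01, h.h1⟩ le_rfl)))

/-! ### The `L²` norm and the Dirichlet form of `fₙ` -/

/-- `μ` does not charge `(-∞, 0]`, so a function vanishing on `[x₁, ∞)` can be integrated over
`(0, x₁)` alone. -/
theorem muM_lintegral_eq {a b : ℝ → ℝ} {D : ℝ≥0∞} {x₁ : ℝ}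
    {g : ℝ → ℝ≥0∞} (hg : ∀ x, x₁ ≤ x → g x = 0) :
    ∫⁻ x, g x ∂(muM a b D) = ∫⁻ x in Set.Ioo 0 x₁, g x ∂(muM a b D) := by
  have hr : (muM a b D).restrict (ooI D) = muM a b D := by
    rw [muM, restrict_withDensity (measurableSet_ooI D),
      Measure.restrict_restrict (measurableSet_ooI D), Set.inter_self]
  have hi : ∫⁻ x in ooI D, g x ∂(muM a b D) =
      ∫⁻ x in ooI D, (Set.Ioo 0 x₁).indicator g x ∂(muM a b D) := by
    refine setLIntegral_congr_fun (measurableSet_ooI D) fun x hx => ?_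
    by_cases hx1 : x < x₁
    · exact (Set.indicator_of_mem (Set.mem_Ioo.2 ⟨hx.1, hx1⟩) g).symm
    · exact (hg x (not_lt.1 hx1)).trans
        (Set.indicator_of_notMem (fun hh => hx1 hh.2) g).symm
  rw [hr, lintegral_indicator measurableSet_Ioo] at hi
  exact hi

section adm2

variable {a b : ℝ → ℝ} {D : ℝ≥0∞} {x₀ x₁ : ℝ}

/-- Tonelli on the region `0 < u < s`, `x₀ < s < x₁`. -/
theorem Adm.fubini (h : Adm a b D x₀ x₁) (m n : ℕ) :
    ∫⁻ s in Set.Ioo x₀ x₁, Kf a b D x₀ x₁ m s * Kf a b D x₀ x₁ (n + 1) s ∂(nuM a b D) =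
      ∫⁻ u in Set.Ioo 0 x₁, ENNReal.ofReal (fseqLoc a b D x₀ x₁ n u) *
        Pf a b D x₀ x₁ m (max u x₀) ∂(muM a b D) := by
  have : SFinite (nuM a b D) := by unfold nuM; infer_instance
  have : SFinite (muM a b D) := by unfold muM; infer_instance
  have hφ : Measurable fun u => ENNReal.ofReal (fseqLoc a b D x₀ x₁ n u) :=
    (h.measurable_f n).ennreal_ofReal
  have hK : Measurable (Kf a b D x₀ x₁ m) := (Kf_mono a b D x₀ x₁ m).measurable
  set φ : ℝ → ℝ≥0∞ := fun u => ENNReal.ofReal (fseqLoc a b D x₀ x₁ n u) with hφdef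
  have hL : ∀ s ∈ Set.Ioo x₀ x₁, Kf a b D x₀ x₁ m s * Kf a b D x₀ x₁ (n + 1) s =
      ∫⁻ u in Set.Ioo 0 x₁, (if u < s then Kf a b D x₀ x₁ m s * φ u else 0) ∂(muM a b D) := by
    intro s hs
    have e : (fun u => if u < s then Kf a b D x₀ x₁ m s * φ u else 0) =
        (Set.Iio s).indicator fun u => Kf a b D x₀ x₁ m s * φ u := by
      ext u; simp [Set.indicator_apply]
    have e2 : Set.Iio s ∩ Set.Ioo 0 x₁ = Set.Ioo 0 s := by
      ext u
      simp only [Set.mem_inter_iff, Set.mem_Iio, Set.mem_Ioo]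
      exact ⟨fun hu => ⟨hu.2.1, hu.1⟩, fun hu => ⟨hu.2, hu.1, hu.2.trans hs.2⟩⟩
    rw [e, lintegral_indicator measurableSet_Iio, Measure.restrict_restrict measurableSet_Iio, e2,
      lintegral_const_mul _ hφ]
    rfl
  have hR : ∀ u ∈ Set.Ioo 0 x₁,
      ∫⁻ s in Set.Ioo x₀ x₁, (if u < s then Kf a b D x₀ x₁ m s * φ u else 0) ∂(nuM a b D) =
        φ u * Pf a b D x₀ x₁ m (max u x₀) := by
    intro u hu
    have e : (fun s => if u < s then Kf a b D x₀ x₁ m s * φ u else 0) =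
        (Set.Ioi u).indicator fun s => Kf a b D x₀ x₁ m s * φ u := by
      ext s; simp [Set.indicator_apply]
    have e2 : Set.Ioi u ∩ Set.Ioo x₀ x₁ = Set.Ioo (max u x₀) x₁ := by
      ext s
      simp only [Set.mem_inter_iff, Set.mem_Ioi, Set.mem_Ioo, max_lt_iff]
      tauto
    rw [e, lintegral_indicator measurableSet_Ioi, Measure.restrict_restrict measurableSet_Ioi, e2,
      lintegral_mul_const _ hK, mul_comm]
    rfl
  rw [setLIntegral_congr_fun measurableSet_Ioo hL, lintegral_lintegral_swap]
  · exact setLIntegral_congr_fun measurableSet_Ioo hR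
  · refine Measurable.aemeasurable ?_
    exact Measurable.ite (measurableSet_lt measurable_snd measurable_fst)
      ((hK.comp measurable_fst).mul (hφ.comp measurable_snd)) measurable_const

theorem Adm.muL2_eq (h : Adm a b D x₀ x₁) (n : ℕ) :
    muL2 a b D (fseqLoc a b D x₀ x₁ n) =
      ∫⁻ u in Set.Ioo 0 x₁, ENNReal.ofReal (fseqLoc a b D x₀ x₁ n u) *
        Pf a b D x₀ x₁ n (max u x₀) ∂(muM a b D) := by
  rw [muL2, muM_lintegral_eq]
  · refine setLIntegral_congr_fun measurableSet_Ioo fun u hu => ?_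
    rw [← h.ofReal_f n hu.1.le hu.2, sq, ENNReal.ofReal_mul (h.f_nonneg n u)]
  · intro x hx
    rw [fseqLoc_zero_of_not _ _ _ _ _ _ (fun hh => absurd hh.2 (not_lt.2 hx))]
    simp

/-- The infimum of `II(f₀)` is attained at `x₀`: on `[x₀, x₁)`, `II(f₀)(x)` is the `ν`-average
over `(x, x₁)` of the nondecreasing function `K₁`. -/
theorem Adm.ratio_zero (h : Adm a b D x₀ x₁) :
    Pf a b D x₀ x₁ 1 x₀ / Pf a b D x₀ x₁ 0 x₀ =
      ⨅ x ∈ Set.Iio x₁, opIIcut a b D x₁ (fseqLoc a b D x₀ x₁ 0) x := by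
  apply le_antisymm
  · rw [h.le_II_iff 0]
    intro x hx hx1
    have hP0 : ∀ x, Pf a b D x₀ x₁ 0 x = nuM a b D (Set.Ioo x x₁) := fun x => by simp [Pf, Kf]
    have hKm : Measurable (Kf a b D x₀ x₁ 1) := (Kf_mono a b D x₀ x₁ 1).measurable
    have hsplit : Set.Ioc x₀ x ∪ Set.Ioo x x₁ = Set.Ioo x₀ x₁ := Set.Ioc_union_Ioo_eq_Ioo hx hx1
    have hdisj : Disjoint (Set.Ioc x₀ x) (Set.Ioo x x₁) :=
      Set.disjoint_left.2 fun s hs hs2 => absurd hs.2 (not_le.2 hs2.1)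
    -- split `(x₀, x₁)` at `x` and compare `K₁` with `K₁(x)` on the two pieces
    have e1 : Pf a b D x₀ x₁ 1 x₀ ≤
        Kf a b D x₀ x₁ 1 x * nuM a b D (Set.Ioc x₀ x) + Pf a b D x₀ x₁ 1 x := by
      conv_lhs => rw [Pf, ← hsplit, lintegral_union measurableSet_Ioo hdisj]
      refine add_le_add ?_ le_rfl
      rw [← setLIntegral_const]
      exact setLIntegral_mono measurable_const fun s hs => Kf_mono a b D x₀ x₁ 1 hs.2
    have e2 : Kf a b D x₀ x₁ 1 x * Pf a b D x₀ x₁ 0 x ≤ Pf a b D x₀ x₁ 1 x := by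
      rw [hP0, ← setLIntegral_const]
      exact setLIntegral_mono hKm fun s hs => Kf_mono a b D x₀ x₁ 1 hs.1.le
    have e3 : Pf a b D x₀ x₁ 0 x₀ = nuM a b D (Set.Ioc x₀ x) + Pf a b D x₀ x₁ 0 x := by
      rw [hP0, hP0, ← hsplit, measure_union hdisj measurableSet_Ioo]
    rw [← ENNReal.mul_div_right_comm]
    refine ENNReal.div_le_of_le_mul ?_
    calc Pf a b D x₀ x₁ 1 x₀ * Pf a b D x₀ x₁ 0 x
        ≤ (Kf a b D x₀ x₁ 1 x * nuM a b D (Set.Ioc x₀ x) + Pf a b D x₀ x₁ 1 x) *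
            Pf a b D x₀ x₁ 0 x := by gcongr
      _ = (Kf a b D x₀ x₁ 1 x * Pf a b D x₀ x₁ 0 x) * nuM a b D (Set.Ioc x₀ x) +
            Pf a b D x₀ x₁ 1 x * Pf a b D x₀ x₁ 0 x := by ring
      _ ≤ Pf a b D x₀ x₁ 1 x * nuM a b D (Set.Ioc x₀ x) +
            Pf a b D x₀ x₁ 1 x * Pf a b D x₀ x₁ 0 x := by gcongr
      _ = Pf a b D x₀ x₁ 1 x * Pf a b D x₀ x₁ 0 x₀ := by rw [e3]; ring
  · refine (iInf₂_le x₀ h.h01).trans_eq ?_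
    rw [h.II_of_mem 0 h.h0 h.h01, max_self]

theorem Adm.Kf_toReal_continuousOn (h : Adm a b D x₀ x₁) (n : ℕ) :
    ContinuousOn (fun s => (Kf a b D x₀ x₁ n s).toReal) (Set.Icc 0 x₁) := by
  cases n with
  | zero => exact continuousOn_const
  | succ n =>
    have hac : muM a b D ≪ volume :=
      (withDensity_absolutelyContinuous _ _).trans Measure.restrict_le_self.absolutelyContinuous
    have : NullSingletonClass (muM a b D) := ⟨fun x => hac (measure_singleton x)⟩
    have hfin : ∫⁻ u, ENNReal.ofReal (fseqLoc a b D x₀ x₁ n u) ∂(muM a b D) < ∞ := by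
      rw [muM_lintegral_eq]
      · exact h.Kf_lt_top (n + 1) le_rfl
      · intro x hx
        rw [fseqLoc_zero_of_not _ _ _ _ _ _ (fun hh => absurd hh.2 (not_lt.2 hx))]
        simp
    have hint : Integrable (fseqLoc a b D x₀ x₁ n) (muM a b D) :=
      (lintegral_ofReal_ne_top_iff_integrable (h.measurable_f n).aestronglyMeasurable
        (Eventually.of_forall (h.f_nonneg n))).1 hfin.ne
    refine (intervalIntegral.continuousOn_primitive (a := 0) (b := x₁)
      hint.integrableOn).congr fun s hs => ?_
    simp only [Kf]
    rw [integral_Ioc_eq_integral_Ioo, integral_eq_lintegral_of_nonneg_ae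
      (Eventually.of_forall (h.f_nonneg n)) (h.measurable_f n).aestronglyMeasurable]

/-- The density `e^{-C} Kₙ`, which is `-fₙ'` on `(x₀, x₁)`. The argument is clamped to `[0, x₁]`
to make the function continuous on all of `ℝ`. -/
def Hf (a b : ℝ → ℝ) (D : ℝ≥0∞) (x₀ x₁ : ℝ) (n : ℕ) (x : ℝ) : ℝ :=
  Real.exp (-Cf a b (max 0 (min x x₁))) * (Kf a b D x₀ x₁ n (max 0 (min x x₁))).toReal

theorem Adm.pos1 (h : Adm a b D x₀ x₁) : 0 < x₁ := h.h0.trans_lt h.h01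

theorem Adm.Hf_continuous (h : Adm a b D x₀ x₁) (n : ℕ) : Continuous (Hf a b D x₀ x₁ n) := by
  have hc : Continuous fun x : ℝ => max 0 (min x x₁) := by fun_prop
  have hcl : ∀ x : ℝ, max 0 (min x x₁) ∈ Set.Icc 0 x₁ :=
    fun x => ⟨le_max_left _ _, max_le h.pos1.le (min_le_right _ _)⟩
  have h1 := (Cf_continuousOn h.hyp h.pos1.le h.h1.le).comp_continuous hc hcl
  have h2 := (h.Kf_toReal_continuousOn n).comp_continuous hc hcl
  exact (Real.continuous_exp.comp h1.neg).mul h2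

theorem Hf_nonneg (a b : ℝ → ℝ) (D : ℝ≥0∞) (x₀ x₁ : ℝ) (n : ℕ) (x : ℝ) :
    0 ≤ Hf a b D x₀ x₁ n x := by unfold Hf; positivity

theorem Hf_eq {n : ℕ} {x : ℝ} (hx : 0 ≤ x) (hx1 : x ≤ x₁) :
    Hf a b D x₀ x₁ n x = Real.exp (-Cf a b x) * (Kf a b D x₀ x₁ n x).toReal := by
  simp [Hf, min_eq_left hx1, max_eq_right hx]

theorem Adm.Pf_toReal (h : Adm a b D x₀ x₁) (n : ℕ) {x : ℝ} (hx : 0 ≤ x) (hx1 : x ≤ x₁) :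
    (Pf a b D x₀ x₁ n x).toReal = ∫ s in x..x₁, Hf a b D x₀ x₁ n s := by
  rw [intervalIntegral.integral_of_le hx1, integral_Ioc_eq_integral_Ioo,
    integral_eq_lintegral_of_nonneg_ae (Eventually.of_forall (Hf_nonneg a b D x₀ x₁ n))
      (h.Hf_continuous n).aestronglyMeasurable, Pf,
    nuM_lintegral h.hyp hx h.h1.le (Kf_mono a b D x₀ x₁ n).measurable]
  congr 1
  refine setLIntegral_congr_fun measurableSet_Ioo fun s hs => ?_
  rw [Hf_eq (hx.trans hs.1.le) hs.2.le, ENNReal.ofReal_mul (Real.exp_pos _).le,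
    ENNReal.ofReal_toReal (h.Kf_lt_top n hs.2.le).ne]

theorem hasDerivAt_integral_left {g : ℝ → ℝ} (hg : Continuous g) (x y : ℝ) :
    HasDerivAt (fun x => ∫ s in x..y, g s) (-g x) x :=
  intervalIntegral.integral_hasDerivAt_left (hg.intervalIntegrable _ _)
    (hg.stronglyMeasurableAtFilter _ _) hg.continuousAt

theorem Adm.deriv_f (h : Adm a b D x₀ x₁) (n : ℕ) {x : ℝ} (hx : x ∈ Set.Ioo x₀ x₁) :
    deriv (fseqLoc a b D x₀ x₁ n) x = -Hf a b D x₀ x₁ n x := by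
  refine HasDerivAt.deriv ?_
  refine (hasDerivAt_integral_left (h.Hf_continuous n) x x₁).congr_of_eventuallyEq ?_
  filter_upwards [isOpen_Ioo.mem_nhds hx] with y hy
  have hy0 : 0 ≤ y := h.h0.trans hy.1.le
  rw [h.f_eq n hy0 hy.2, max_eq_left hy.1.le, h.Pf_toReal n hy0 hy.2.le]

theorem Adm.deriv_f_zero (h : Adm a b D x₀ x₁) (n : ℕ) {x : ℝ} (hx : 0 < x)
    (hx' : x < x₀ ∨ x₁ < x) : deriv (fseqLoc a b D x₀ x₁ n) x = 0 := by
  rcases hx' with hx' | hx'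
  · have e : fseqLoc a b D x₀ x₁ n =ᶠ[𝓝 x] fun _ => (Pf a b D x₀ x₁ n x₀).toReal := by
      filter_upwards [isOpen_Ioo.mem_nhds (Set.mem_Ioo.2 ⟨hx, hx'⟩)] with y hy
      rw [h.f_eq n hy.1.le (hy.2.trans h.h01), max_eq_right hy.2.le]
    rw [e.deriv_eq, deriv_const]
  · have e : fseqLoc a b D x₀ x₁ n =ᶠ[𝓝 x] fun _ => 0 := by
      filter_upwards [isOpen_Ioi.mem_nhds hx'] with y hy
      exact fseqLoc_zero_of_not _ _ _ _ _ _ (fun hh => absurd hh.2 (not_lt.2 (le_of_lt hy)))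
    rw [e.deriv_eq, deriv_const]

/-- `D(fₙ) = ∫_{x₀}^{x₁} Kₙ² dν`. The kinks of `fₙ` at `x₀` and `x₁` are Lebesgue-null. -/
theorem Adm.Dform_eq (h : Adm a b D x₀ x₁) (n : ℕ) :
    Dform a b D (fseqLoc a b D x₀ x₁ n) =
      ∫⁻ s in Set.Ioo x₀ x₁, Kf a b D x₀ x₁ n s * Kf a b D x₀ x₁ n s ∂(nuM a b D) := by
  have hKm : Measurable (Kf a b D x₀ x₁ n) := (Kf_mono a b D x₀ x₁ n).measurable
  have hKK : Measurable fun s => Kf a b D x₀ x₁ n s * Kf a b D x₀ x₁ n s := hKm.mul hKm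
  rw [nuM_lintegral h.hyp h.h0 h.h1.le hKK, Dform]
  have hne : ∀ y : ℝ, ∀ᵐ x ∂(volume.restrict (ooI D)), x ≠ y := fun y =>
    ae_restrict_of_ae (by simp [ae_iff])
  have hi : ∫⁻ x in ooI D,
      ENNReal.ofReal (Real.exp (Cf a b x) * deriv (fseqLoc a b D x₀ x₁ n) x ^ 2) =
      ∫⁻ x in ooI D, (Set.Ioo x₀ x₁).indicator (fun s => ENNReal.ofReal (Real.exp (-Cf a b s)) *
        (Kf a b D x₀ x₁ n s * Kf a b D x₀ x₁ n s)) x := by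
    refine lintegral_congr_ae ?_
    filter_upwards [hne x₀, hne x₁, ae_restrict_mem (measurableSet_ooI D)] with x hx0 hx1 hx
    by_cases hxm : x ∈ Set.Ioo x₀ x₁
    · rw [Set.indicator_of_mem hxm, h.deriv_f n hxm, Hf_eq hx.1.le hxm.2.le]
      have hKt : Kf a b D x₀ x₁ n x = ENNReal.ofReal (Kf a b D x₀ x₁ n x).toReal :=
        (ENNReal.ofReal_toReal (h.Kf_lt_top n hxm.2.le).ne).symm
      conv_rhs => rw [hKt]
      rw [← ENNReal.ofReal_mul ENNReal.toReal_nonneg, ← ENNReal.ofReal_mul (Real.exp_pos _).le]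
      congr 1
      rw [Real.exp_neg]
      have := (Real.exp_pos (Cf a b x)).ne'
      field_simp
    · rw [Set.indicator_of_notMem hxm, h.deriv_f_zero n hx.1]
      · simp
      · by_contra hcon
        push Not at hcon
        exact hxm ⟨lt_of_le_of_ne hcon.1 hx0.symm, lt_of_le_of_ne hcon.2 hx1⟩
  rw [hi, lintegral_indicator measurableSet_Ioo, Measure.restrict_restrict measurableSet_Ioo,
    Set.inter_eq_left.2 (Ioo_subset_ooI h.h0 h.h1.le)]

theorem Adm.Dform_pos (h : Adm a b D x₀ x₁) (n : ℕ) :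
    0 < Dform a b D (fseqLoc a b D x₀ x₁ n) := by
  rw [h.Dform_eq n]
  have hKm : Measurable (Kf a b D x₀ x₁ n) := (Kf_mono a b D x₀ x₁ n).measurable
  refine lintegral_Ioo_pos (hKm.mul hKm) (fun s hs => ?_) (nuM_pos h.hyp h.h0 h.h01 h.h1.le)
  have := h.Kf_pos n (h.h0.trans_lt hs.1) hs.2.le
  exact ENNReal.mul_pos this.ne' this.ne'

theorem Adm.Dform_lt_top (h : Adm a b D x₀ x₁) (n : ℕ) :
    Dform a b D (fseqLoc a b D x₀ x₁ n) < ∞ := by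
  rw [h.Dform_eq n]
  have hK1 := h.Kf_lt_top n (le_refl x₁)
  calc _ ≤ ∫⁻ _ in Set.Ioo x₀ x₁, Kf a b D x₀ x₁ n x₁ * Kf a b D x₀ x₁ n x₁ ∂(nuM a b D) :=
        setLIntegral_mono measurable_const fun s hs =>
          mul_le_mul' (Kf_mono a b D x₀ x₁ n hs.2.le) (Kf_mono a b D x₀ x₁ n hs.2.le)
    _ = _ := setLIntegral_const _ _
    _ < ∞ := ENNReal.mul_lt_top (ENNReal.mul_lt_top hK1 hK1) (nuM_lt_top h.hyp h.h0 h.h1.le)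

/-! ### The ratio `μ(fₙ²) / D(fₙ)` against `inf II` -/

theorem Adm.bar_zero (h : Adm a b D x₀ x₁) :
    muL2 a b D (fseqLoc a b D x₀ x₁ 0) / Dform a b D (fseqLoc a b D x₀ x₁ 0) =
      ⨅ x ∈ Set.Iio x₁, opIIcut a b D x₁ (fseqLoc a b D x₀ x₁ 0) x := by
  rw [← h.ratio_zero, h.muL2_eq, ← h.fubini 0 0, h.Dform_eq]
  simp only [Pf, Kf, one_mul]

/-- By Tonelli `D(fₙ₊₁) = μ(fₙ fₙ₊₁)`, so `c fₙ ≤ fₙ₊₁` gives `c D(fₙ₊₁) ≤ μ(fₙ₊₁²)`. -/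
theorem Adm.inf_le_bar (h : Adm a b D x₀ x₁) (n : ℕ) :
    (⨅ x ∈ Set.Iio x₁, opIIcut a b D x₁ (fseqLoc a b D x₀ x₁ n) x) ≤
      muL2 a b D (fseqLoc a b D x₀ x₁ (n + 1)) / Dform a b D (fseqLoc a b D x₀ x₁ (n + 1)) := by
  have hc := (h.le_II_iff n _).1 le_rfl
  generalize (⨅ x ∈ Set.Iio x₁, opIIcut a b D x₁ (fseqLoc a b D x₀ x₁ n) x) = c at hc
  have hm : ∀ k, Measurable fun u => Pf a b D x₀ x₁ k (max u x₀) := fun k =>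
    (Pf_anti a b D x₀ x₁ k).measurable.comp (measurable_id.max measurable_const)
  have hfP : ∀ k l, Measurable fun u =>
      ENNReal.ofReal (fseqLoc a b D x₀ x₁ k u) * Pf a b D x₀ x₁ l (max u x₀) := fun k l =>
    (h.measurable_f k).ennreal_ofReal.mul (hm l)
  rw [ENNReal.le_div_iff_mul_le (Or.inl (h.Dform_pos _).ne') (Or.inl (h.Dform_lt_top _).ne),
    h.Dform_eq, h.fubini (n + 1) n, h.muL2_eq,
    ← lintegral_const_mul _ (hfP _ _)]
  refine setLIntegral_mono (hfP _ _) fun u hu => ?_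
  rw [← mul_assoc, h.ofReal_f n hu.1.le hu.2, h.ofReal_f (n + 1) hu.1.le hu.2]
  gcongr
  exact hc _ (le_max_right _ _) (max_lt hu.2 h.h01)

end adm2

/-! ### Test functions for `λ₀` -/

/-- The variational bound for a test function that need not be normalized; the case `μ(f²) = 0`
is trivial, and otherwise `f` is rescaled. -/
theorem lam0_mul_le {a b : ℝ → ℝ} {D : ℝ≥0∞} {f : ℝ → ℝ} (hf : C1C D f)
    (hp : ∃ p : ℝ, 0 ≤ p ∧ ENNReal.ofReal p < D ∧ ∀ x, p < x → f x = 0)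
    (hfD : D ≠ ∞ → f D.toReal = 0) (hfin : muL2 a b D f < ∞) :
    lam0 a b D * muL2 a b D f ≤ Dform a b D f := by
  by_cases h0 : muL2 a b D f = 0
  · simp [h0]
  rw [← ENNReal.le_div_iff_mul_le (Or.inl h0) (Or.inl hfin.ne)]
  set m := (muL2 a b D f).toReal with hm
  have hmpos : 0 < m := ENNReal.toReal_pos h0 hfin.ne
  set c : ℝ := (Real.sqrt m)⁻¹ with hc
  have hc2 : c ^ 2 = m⁻¹ := by rw [hc, inv_pow, Real.sq_sqrt hmpos.le]
  have hcE : ENNReal.ofReal (c ^ 2) = (muL2 a b D f)⁻¹ := by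
    rw [hc2, ENNReal.ofReal_inv_of_pos hmpos, hm, ENNReal.ofReal_toReal hfin.ne]
  have hderiv : deriv (fun x => c * f x) = fun x => c * deriv f x := by
    ext x; exact deriv_const_mul_field c
  refine sInf_le ⟨fun x => c * f x, ⟨hf.1.const_smul c, fun x hx => (hf.2.1 x hx).const_mul c, ?_⟩,
    ?_, ?_, ?_, ?_⟩
  · rw [hderiv]; exact hf.2.2.const_smul c
  · obtain ⟨p, hp0, hpD, hpf⟩ := hp
    exact ⟨p, hp0, hpD, fun x hx => by simp [hpf x hx]⟩
  · intro hD; simp [hfD hD]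
  · have : muL2 a b D (fun x => c * f x) = ENNReal.ofReal (c ^ 2) * muL2 a b D f := by
      rw [muL2, muL2, ← lintegral_const_mul' _ _ ENNReal.ofReal_ne_top]
      refine lintegral_congr fun x => ?_
      rw [← ENNReal.ofReal_mul (sq_nonneg c), mul_pow]
    rw [this, hcE, ENNReal.inv_mul_cancel h0 hfin.ne]
  · rw [ENNReal.div_eq_inv_mul, ← hcE, Dform, Dform,
      ← lintegral_const_mul' _ _ ENNReal.ofReal_ne_top]
    refine lintegral_congr fun x => ?_
    rw [← ENNReal.ofReal_mul (sq_nonneg c), hderiv]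
    congr 1
    ring

/-- Continuous cutoffs `χₖ(s) = min (1, k · dist(s, (x₀, x₁)ᶜ))`, increasing to the indicator of
`(x₀, x₁)`. -/
def cutoff (x₀ x₁ : ℝ) (k : ℕ) (s : ℝ) : ℝ := min 1 (k * max 0 (min (s - x₀) (x₁ - s)))

section cut

variable {x₀ x₁ : ℝ}

theorem cutoff_continuous (x₀ x₁ : ℝ) (k : ℕ) : Continuous (cutoff x₀ x₁ k) := by
  unfold cutoff; fun_prop

theorem cutoff_nonneg (x₀ x₁ : ℝ) (k : ℕ) (s : ℝ) : 0 ≤ cutoff x₀ x₁ k s :=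
  le_min zero_le_one (mul_nonneg k.cast_nonneg (le_max_left _ _))

theorem cutoff_le_one (x₀ x₁ : ℝ) (k : ℕ) (s : ℝ) : cutoff x₀ x₁ k s ≤ 1 := min_le_left _ _

theorem cutoff_eq_zero (k : ℕ) {s : ℝ} (hs : s ∉ Set.Ioo x₀ x₁) : cutoff x₀ x₁ k s = 0 := by
  have : min (s - x₀) (x₁ - s) ≤ 0 := by
    by_contra! hcon
    rw [lt_min_iff] at hcon
    exact hs ⟨by linarith [hcon.1], by linarith [hcon.2]⟩
  simp [cutoff, max_eq_left this]

theorem cutoff_tendsto {s : ℝ} (hs : s ∈ Set.Ioo x₀ x₁) :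
    Tendsto (fun k => cutoff x₀ x₁ k s) atTop (𝓝 1) := by
  have hd : 0 < max 0 (min (s - x₀) (x₁ - s)) :=
    lt_max_of_lt_right (lt_min (by linarith [hs.1]) (by linarith [hs.2]))
  refine tendsto_const_nhds.congr' ?_
  filter_upwards [(tendsto_natCast_atTop_atTop (R := ℝ)).eventually_ge_atTop
    (max 0 (min (s - x₀) (x₁ - s)))⁻¹] with k hk
  refine (min_eq_left ?_).symm
  calc (1 : ℝ) = (max 0 (min (s - x₀) (x₁ - s)))⁻¹ * max 0 (min (s - x₀) (x₁ - s)) :=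
        (inv_mul_cancel₀ hd.ne').symm
    _ ≤ _ := by gcongr

end cut

section adm3

variable {a b : ℝ → ℝ} {D : ℝ≥0∞} {x₀ x₁ : ℝ}

/-- A continuous `g` vanishing off `(x₀, x₁)` yields the admissible test function
`x ↦ ∫_x^{x₁} g`. -/
theorem Adm.lam0_mul_le_of_test (h : Adm a b D x₀ x₁) {g : ℝ → ℝ} (hg : Continuous g)
    (hg0 : ∀ s, s ∉ Set.Ioo x₀ x₁ → g s = 0) :
    lam0 a b D * muL2 a b D (fun x => ∫ s in x..x₁, g s) ≤
      ∫⁻ x in ooI D, ENNReal.ofReal (Real.exp (Cf a b x) * g x ^ 2) := by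
  have hder := fun x => hasDerivAt_integral_left hg x x₁
  have hcont : Continuous fun x => ∫ s in x..x₁, g s :=
    continuous_iff_continuousAt.2 fun x => (hder x).continuousAt
  have hderiv : deriv (fun x => ∫ s in x..x₁, g s) = fun x => -g x := by
    ext x; exact (hder x).deriv
  have hzero : ∀ x, x₁ ≤ x → ∫ s in x..x₁, g s = 0 := by
    intro x hx
    rw [intervalIntegral.integral_symm, intervalIntegral.integral_of_le hx,
      setIntegral_eq_zero_of_forall_eq_zero, neg_zero]
    exact fun s hs => hg0 s fun hh => absurd hh.2 (not_lt.2 hs.1.le)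
  have hD : Dform a b D (fun x => ∫ s in x..x₁, g s) =
      ∫⁻ x in ooI D, ENNReal.ofReal (Real.exp (Cf a b x) * g x ^ 2) := by
    simp only [Dform, hderiv, neg_sq]
  rw [← hD]
  refine lam0_mul_le ⟨hcont.continuousOn, fun x _ => (hder x).differentiableAt, ?_⟩
    ⟨x₁, h.pos1.le, h.h1, fun x hx => hzero x hx.le⟩ ?_ ?_
  · rw [hderiv]; exact hg.neg.continuousOn
  · intro hDt
    exact hzero _ ((ENNReal.ofReal_le_iff_le_toReal hDt).1 h.h1.le)
  · rw [muL2, muM_lintegral_eq (fun x hx => by simp [hzero x hx])]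
    obtain ⟨M, hM⟩ := (isCompact_Icc (a := (0 : ℝ)) (b := x₁)).exists_bound_of_continuousOn
      (hcont.pow 2).continuousOn
    calc _ ≤ ∫⁻ _ in Set.Ioo 0 x₁, ENNReal.ofReal M ∂(muM a b D) :=
          setLIntegral_mono measurable_const fun x hx => ENNReal.ofReal_le_ofReal
            ((le_abs_self _).trans (hM x (Set.Ioo_subset_Icc_self hx)))
      _ = ENNReal.ofReal M * muM a b D (Set.Ioo 0 x₁) := setLIntegral_const _ _
      _ < ∞ := ENNReal.mul_lt_top ENNReal.ofReal_lt_top (muM_lt_top h.hyp le_rfl h.h1.le)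

theorem Adm.f_eq_integral (h : Adm a b D x₀ x₁) (n : ℕ) {x : ℝ} (hx : x ∈ Set.Ioo 0 x₁) :
    fseqLoc a b D x₀ x₁ n x =
      ∫ s in x..x₁, (Set.Ioo x₀ x₁).indicator (Hf a b D x₀ x₁ n) s := by
  have hm : max x x₀ ≤ x₁ := max_le hx.2.le h.h01.le
  rw [h.f_eq n hx.1.le hx.2, h.Pf_toReal n (le_max_of_le_left hx.1.le) hm,
    intervalIntegral.integral_of_le hx.2.le, intervalIntegral.integral_of_le hm,
    integral_Ioc_eq_integral_Ioo, integral_Ioc_eq_integral_Ioo,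
    setIntegral_indicator measurableSet_Ioo]
  congr 2
  ext s
  simp only [Set.mem_inter_iff, Set.mem_Ioo, max_lt_iff]
  tauto

/-- The bound `λ₀ μ(fₙ²) ≤ D(fₙ)` in division form. As `fₙ` has kinks it is not itself a test
function; it is the pointwise limit on `(0, x₁)` of `∫_x^{x₁} e^{-C} Kₙ χₖ`, whose Dirichlet
forms do not exceed `D(fₙ)`, and Fatou's lemma passes to the limit. -/
theorem Adm.bar_le (h : Adm a b D x₀ x₁) (n : ℕ) :
    muL2 a b D (fseqLoc a b D x₀ x₁ n) / Dform a b D (fseqLoc a b D x₀ x₁ n) ≤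
      (lam0 a b D)⁻¹ := by
  set H := Hf a b D x₀ x₁ n with hH
  have hHc : Continuous H := h.Hf_continuous n
  set g : ℕ → ℝ → ℝ := fun k s => H s * cutoff x₀ x₁ k s with hg
  have hgc : ∀ k, Continuous (g k) := fun k => hHc.mul (cutoff_continuous x₀ x₁ k)
  have hg0 : ∀ k s, s ∉ Set.Ioo x₀ x₁ → g k s = 0 := fun k s hs => by
    simp [hg, cutoff_eq_zero k hs]
  have hle : ∀ k, muL2 a b D (fun x => ∫ s in x..x₁, g k s) ≤
      Dform a b D (fseqLoc a b D x₀ x₁ n) / lam0 a b D := by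
    intro k
    rw [ENNReal.le_div_iff_mul_le (Or.inr (h.Dform_pos n).ne') (Or.inr (h.Dform_lt_top n).ne),
      mul_comm]
    refine (h.lam0_mul_le_of_test (hgc k) (hg0 k)).trans ?_
    refine lintegral_mono fun x => ENNReal.ofReal_le_ofReal ?_
    refine mul_le_mul_of_nonneg_left ?_ (Real.exp_pos _).le
    by_cases hx : x ∈ Set.Ioo x₀ x₁
    · rw [h.deriv_f n hx, neg_sq]
      have h1 := cutoff_nonneg x₀ x₁ k x
      have h2 := cutoff_le_one x₀ x₁ k x
      have h3 : 0 ≤ H x := Hf_nonneg _ _ _ _ _ _ _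
      exact pow_le_pow_left₀ (mul_nonneg h3 h1) (mul_le_of_le_one_right h3 h2) 2
    · rw [hg0 k x hx]; simpa using sq_nonneg _
  have hpt : ∀ x ∈ Set.Ioo 0 x₁, Tendsto (fun k => ∫ s in x..x₁, g k s) atTop
      (𝓝 (fseqLoc a b D x₀ x₁ n x)) := by
    intro x hx
    rw [h.f_eq_integral n hx]
    refine intervalIntegral.tendsto_integral_filter_of_dominated_convergence H
      (Eventually.of_forall fun k => (hgc k).aestronglyMeasurable)
      (Eventually.of_forall fun k => Eventually.of_forall fun s _ => ?_)
      (hHc.intervalIntegrable _ _) (Eventually.of_forall fun s _ => ?_)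
    · have h3 : 0 ≤ H s := Hf_nonneg _ _ _ _ _ _ _
      rw [Real.norm_of_nonneg (mul_nonneg h3 (cutoff_nonneg _ _ _ _))]
      exact mul_le_of_le_one_right h3 (cutoff_le_one _ _ _ _)
    · by_cases hs : s ∈ Set.Ioo x₀ x₁
      · rw [Set.indicator_of_mem hs]
        simpa using (cutoff_tendsto hs).const_mul (H s)
      · rw [Set.indicator_of_notMem hs]
        simp only [hg0 _ s hs]
        exact tendsto_const_nhds
  have hfatou : muL2 a b D (fseqLoc a b D x₀ x₁ n) ≤
      Dform a b D (fseqLoc a b D x₀ x₁ n) / lam0 a b D := by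
    have hcont : ∀ k, Continuous fun x => ∫ s in x..x₁, g k s := fun k =>
      continuous_iff_continuousAt.2 fun x => (hasDerivAt_integral_left (hgc k) x x₁).continuousAt
    rw [muL2, muM_lintegral_eq (fun x hx => by
      rw [fseqLoc_zero_of_not _ _ _ _ _ _ (fun hh => absurd hh.2 (not_lt.2 hx))]; simp)]
    calc ∫⁻ x in Set.Ioo 0 x₁, ENNReal.ofReal (fseqLoc a b D x₀ x₁ n x ^ 2) ∂(muM a b D)
        = ∫⁻ x in Set.Ioo 0 x₁, liminf (fun k => ENNReal.ofReal ((∫ s in x..x₁, g k s) ^ 2)) atTop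
            ∂(muM a b D) := by
          refine setLIntegral_congr_fun measurableSet_Ioo fun x hx => ?_
          exact (ENNReal.tendsto_ofReal ((hpt x hx).pow 2)).liminf_eq.symm
      _ ≤ liminf (fun k => ∫⁻ x in Set.Ioo 0 x₁, ENNReal.ofReal ((∫ s in x..x₁, g k s) ^ 2)
            ∂(muM a b D)) atTop :=
          lintegral_liminf_le fun k => ((hcont k).pow 2).measurable.ennreal_ofReal
      _ ≤ liminf (fun _ : ℕ => Dform a b D (fseqLoc a b D x₀ x₁ n) / lam0 a b D) atTop :=
          liminf_le_liminf (Eventually.of_forall fun k =>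
            (setLIntegral_le_lintegral _ _).trans (hle k))
      _ = _ := liminf_const _
  refine ENNReal.div_le_of_le_mul ?_
  rwa [mul_comm, ← div_eq_mul_inv]

end adm3

/-- Theorem 2.5(2)-(3): approximating procedure for upper bounds of the ND principal
eigenvalue: `δ⁻¹ ≥ (δₙ')⁻¹ ≥ λ₀`, `δ̄ₙ⁻¹ ≥ λ₀`, `δ̄_{n+1} ≥ δₙ'` and `δ̄₁ = δ₁'`. -/
theorem nd_approximating_procedure_upper
    (a b : ℝ → ℝ) (D : ℝ≥0∞) (hD : 0 < D) (hyp : Hyp a b D)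
    (hdelta : deltaND a b D < ∞) :
    (∀ n : ℕ, (delLoc a b D n)⁻¹ ≤ (deltaND a b D)⁻¹ ∧ lam0 a b D ≤ (delLoc a b D n)⁻¹) ∧
    (∀ n : ℕ, lam0 a b D ≤ (delBar a b D n)⁻¹) ∧
    (∀ n : ℕ, delLoc a b D n ≤ delBar a b D (n + 1)) ∧
    delBar a b D 0 = delLoc a b D 0 := by
  have hbar : ∀ n, lam0 a b D ≤ (delBar a b D n)⁻¹ := by
    intro n
    rw [ENNReal.le_inv_iff_le_inv]
    exact iSup_le fun x₀ => iSup_le fun x₁ => iSup_le fun h =>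
      Adm.bar_le ⟨hyp, h.1, h.2.1, h.2.2⟩ n
  have hloc : ∀ n, delLoc a b D n ≤ delBar a b D (n + 1) := fun n =>
    iSup_mono fun x₀ => iSup_mono fun x₁ => iSup_mono fun h =>
      Adm.inf_le_bar ⟨hyp, h.1, h.2.1, h.2.2⟩ n
  refine ⟨fun n => ⟨ENNReal.inv_le_inv.2 (delta_le_delLoc hyp n),
    (hbar (n + 1)).trans (ENNReal.inv_le_inv.2 (hloc n))⟩, hbar, hloc, ?_⟩
  exact iSup_congr fun x₀ => iSup_congr fun x₁ => iSup_congr fun h =>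
    Adm.bar_zero ⟨hyp, h.1, h.2.1, h.2.2⟩
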